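/- arXiv:2605.13562 — 2 statements merged into one kernel-verified Lean document; each statement's English description precedes it below -/
import Mathlib

section
/- For every real parameter a > 1/2 and every s ∈ ℝ, with the squared norm of the second fundamental form defined by |II|²(s) := 2·(B''(s)/B(s) − 1), one has the identity |II|²(s)·B(s)⁴ = 2·K², equivalently B(s)³·B''(s) − B(s)⁴ = K². -/
/-!
Differentiating `√f` twice gives `(√f)'' = (2 f f'' - f' ^ 2) / (4 (√f) ^ 3)`. For
`f s = a cosh (2 s) - 1 / 2` one has `f'' = 4 f + 2` and `f' ^ 2 = (2 f + 1) ^ 2 - 4 a ^ 2`, so that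
`B = √f` satisfies the Ermakov equation `B'' = B + (a ^ 2 - 1 / 4) / B ^ 3`.
Both identities follow from it by clearing denominators.
-/

namespace MoriCatenoid

/-- Profile function `B(s) = √(a·cosh(2s) − 1/2)` of the Mori family. -/
noncomputable def B (a s : ℝ) : ℝ := Real.sqrt (a * Real.cosh (2 * s) - 1 / 2)

/-- Profile function `A(s) = √(a·cosh(2s) + 1/2)` of the Mori family. -/
noncomputable def A (a s : ℝ) : ℝ := Real.sqrt (a * Real.cosh (2 * s) + 1 / 2)

/-- The constant `K = √(a² − 1/4)`. -/
noncomputable def K (a : ℝ) : ℝ := Real.sqrt (a ^ 2 - 1 / 4)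

/-- The angle function `φ(s) = K·∫₀ˢ dt/(A(t)²·B(t))`. -/
noncomputable def φ (a s : ℝ) : ℝ := K a * ∫ t in (0:ℝ)..s, 1 / ((A a t) ^ 2 * B a t)

/-- The mode-one Jacobi field `f_*(s) = d/ds (A(s)·cosh(φ(s)))`. -/
noncomputable def fstar (a s : ℝ) : ℝ := deriv (fun t => A a t * Real.cosh (φ a t)) s

/-- Squared norm of the second fundamental form, `|II|²(s) = 2·(B''(s)/B(s) − 1)`. -/
noncomputable def IIsq (a s : ℝ) : ℝ := 2 * (deriv (deriv (B a)) s / B a s - 1)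

/-- The mode-`k` potential `W_k(s) = |II|²(s) − 2 − k²/B(s)²`. -/
noncomputable def W (a : ℝ) (k : ℤ) (s : ℝ) : ℝ := IIsq a s - 2 - (k : ℝ) ^ 2 / (B a s) ^ 2

/-- Inverse hyperbolic cosine: `arcosh x = log (x + √(x² − 1))`. -/
noncomputable def arcosh (x : ℝ) : ℝ := Real.log (x + Real.sqrt (x ^ 2 - 1))

/-- The axial boost field `u_*(s) = −a·sinh(2s)/B(s)`. -/
noncomputable def ustar (a s : ℝ) : ℝ := -a * Real.sinh (2 * s) / B a s

/-- The radial quadratic form of mode `k`: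
`S_k(u) = ∫_{−s₀}^{s₀} (B·u'² − B·W_k·u²) − coth(r)·B(s₀)·(u(s₀)² + u(−s₀)²)`,
where `u'` is the derivative of `u` within `[−s₀, s₀]`. -/
noncomputable def Sk (a s₀ r : ℝ) (k : ℤ) (u : ℝ → ℝ) : ℝ :=
  (∫ s in (-s₀)..s₀,
      (B a s * (derivWithin u (Set.Icc (-s₀) s₀) s) ^ 2 - B a s * W a k s * u s ^ 2))
    - Real.cosh r / Real.sinh r * B a s₀ * (u s₀ ^ 2 + u (-s₀) ^ 2)

open Filter Topology

theorem hasDerivAt_deriv_sqrt {f f' : ℝ → ℝ} {f'' x : ℝ} (hf : ∀ᶠ y in 𝓝 x, HasDerivAt f (f' y) y)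
    (hf' : HasDerivAt f' f'' x) (hx : 0 < f x) :
    HasDerivAt (deriv fun y => √(f y)) ((2 * f x * f'' - f' x ^ 2) / (4 * √(f x) ^ 3)) x := by
  have hsqrt : √(f x) ≠ 0 := (Real.sqrt_pos.2 hx).ne'
  have hfx : HasDerivAt f (f' x) x := hf.self_of_nhds
  have deriv_sqrt_eq : (deriv fun y => √(f y)) =ᶠ[𝓝 x] fun y => f' y / (2 * √(f y)) := by
    filter_upwards [hf, hfx.continuousAt.eventually_ne hx.ne'] with y hy hy0
    exact (hy.sqrt hy0).deriv
  have hquot := hf'.div ((hfx.sqrt hx.ne').const_mul 2) (mul_ne_zero two_ne_zero hsqrt)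
  refine (hquot.congr_of_eventuallyEq deriv_sqrt_eq).congr_deriv ?_
  field_simp
  rw [Real.sq_sqrt hx.le]
  ring

section

variable {a s : ℝ}

theorem K_sq (ha : 1 / 2 ≤ a) : K a ^ 2 = a ^ 2 - 1 / 4 :=
  Real.sq_sqrt (by nlinarith)

theorem B_pos (h : 1 / 2 < a * Real.cosh (2 * s)) : 0 < B a s :=
  Real.sqrt_pos.2 (sub_pos.2 h)

theorem B_sq (h : 1 / 2 ≤ a * Real.cosh (2 * s)) : B a s ^ 2 = a * Real.cosh (2 * s) - 1 / 2 :=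
  Real.sq_sqrt (sub_nonneg.2 h)

theorem deriv_deriv_B (h : 1 / 2 < a * Real.cosh (2 * s)) :
    deriv (deriv (B a)) s = B a s + (a ^ 2 - 1 / 4) / B a s ^ 3 := by
  have hcosh (t : ℝ) : HasDerivAt (fun y => a * Real.cosh (2 * y) - 1 / 2)
      (2 * a * Real.sinh (2 * t)) t :=
    ((((hasDerivAt_id t).const_mul 2).cosh.const_mul a).sub_const _).congr_deriv
      (by simp only [id]; ring)
  have hsinh : HasDerivAt (fun y => 2 * a * Real.sinh (2 * y)) (4 * a * Real.cosh (2 * s)) s :=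
    (((hasDerivAt_id s).const_mul 2).sinh.const_mul (2 * a)).congr_deriv (by simp only [id]; ring)
  have hB'' : deriv (deriv (B a)) s =
      (2 * (a * Real.cosh (2 * s) - 1 / 2) * (4 * a * Real.cosh (2 * s)) -
        (2 * a * Real.sinh (2 * s)) ^ 2) / (4 * B a s ^ 3) :=
    (hasDerivAt_deriv_sqrt (.of_forall hcosh) hsinh (sub_pos.2 h)).deriv
  have hB : B a s ≠ 0 := (B_pos h).ne'
  have hB4 : B a s ^ 4 = (a * Real.cosh (2 * s) - 1 / 2) ^ 2 := by rw [← B_sq h.le]; ring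
  rw [hB'']
  field_simp
  rw [hB4, Real.sinh_sq]
  ring

theorem IIsq_eq (h : 1 / 2 < a * Real.cosh (2 * s)) :
    IIsq a s = 2 * (a ^ 2 - 1 / 4) / B a s ^ 4 := by
  have hB : B a s ≠ 0 := (B_pos h).ne'
  rw [IIsq, deriv_deriv_B h]
  field_simp
  ring

theorem second_fundamental_form_identity_general (h : 1 / 2 < a * Real.cosh (2 * s)) :
    IIsq a s * B a s ^ 4 = 2 * (a ^ 2 - 1 / 4) ∧
    B a s ^ 3 * deriv (deriv (B a)) s - B a s ^ 4 = a ^ 2 - 1 / 4 := by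
  have hB : B a s ≠ 0 := (B_pos h).ne'
  constructor
  · rw [IIsq_eq h, div_mul_cancel₀ _ (pow_ne_zero 4 hB)]
  · rw [deriv_deriv_B h]
    field_simp
    ring

end

/-- Norm of the second fundamental form: `|II|²(s)·B(s)⁴ = 2·K²`, equivalently
`B(s)³·B''(s) − B(s)⁴ = K²`. -/
theorem second_fundamental_form_identity (a : ℝ) (ha : 1 / 2 < a) (s : ℝ) :
    IIsq a s * B a s ^ 4 = 2 * K a ^ 2 ∧
    B a s ^ 3 * deriv (deriv (B a)) s - B a s ^ 4 = K a ^ 2 := by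
  rw [K_sq ha.le]
  exact second_fundamental_form_identity_general (by nlinarith [Real.one_le_cosh (2 * s)])

end MoriCatenoid
end

section
/- Transcendental inequality: for every real u with 0 < u ≤ 1, one has (u + 2)·√u > (u + 1)·arcosh(u + 1). -/
/-!
Writing `u + 1 = cosh t` with `t > 0`, the squared inequality becomes
`t² cosh² t < (cosh t + 1) sinh² t`. Three steps of Viète's product for `sinh` give
`t cosh (t/2) cosh (t/4) cosh (t/8) ≤ sinh t`, and inserting this lower bound for `sinh t` cancels
the factor `t`: by the half-angle formulas, a polynomial inequality in `cosh (t/4)` remains.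
-/

namespace MoriCatenoid

open Finset in
lemma sinh_eq_two_pow_mul_sinh_mul_prod_cosh (t : ℝ) (n : ℕ) :
    Real.sinh t = 2 ^ n * Real.sinh (t / 2 ^ n) * ∏ i ∈ range n, Real.cosh (t / 2 ^ (i + 1)) := by
  induction n with
  | zero => simp
  | succ n ih =>
    have double_angle : Real.sinh (t / 2 ^ n) =
        2 * Real.sinh (t / 2 ^ (n + 1)) * Real.cosh (t / 2 ^ (n + 1)) := by
      rw [← Real.sinh_two_mul]
      congr 1
      field_simp
      ring
    rw [ih, double_angle, prod_range_succ]
    ring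

open Finset in
lemma mul_prod_cosh_le_sinh {t : ℝ} (ht : 0 ≤ t) (n : ℕ) :
    t * ∏ i ∈ range n, Real.cosh (t / 2 ^ (i + 1)) ≤ Real.sinh t := by
  rw [sinh_eq_two_pow_mul_sinh_mul_prod_cosh t n]
  have h_scale : t ≤ 2 ^ n * Real.sinh (t / 2 ^ n) := by
    rw [← div_le_iff₀' (by positivity), Real.self_le_sinh_iff]
    positivity
  exact mul_le_mul_of_nonneg_right h_scale (prod_nonneg fun _ _ ↦ (Real.cosh_pos _).le)

lemma cosh_eq_two_mul_cosh_half_sq_sub_one (t : ℝ) :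
    Real.cosh t = 2 * Real.cosh (t / 2) ^ 2 - 1 := by
  rw [← mul_div_cancel₀ t two_ne_zero, Real.cosh_two_mul, Real.sinh_sq,
    mul_div_cancel_left₀ _ two_ne_zero]
  ring

lemma sq_two_mul_sq_sub_one_lt_pow_four_mul {c d : ℝ} (hd : 1 < d) (hc : c = 2 * d ^ 2 - 1) :
    (2 * c ^ 2 - 1) ^ 2 < c ^ 4 * (d ^ 2 * (1 + d)) := by
  obtain ⟨e, he, rfl⟩ : ∃ e, 0 < e ∧ d = 1 + e := ⟨d - 1, sub_pos.mpr hd, by ring⟩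
  -- The square absorbs the two negative coefficients, those of `e²` and `e³`, in the difference.
  have sos : c ^ 4 * ((1 + e) ^ 2 * (1 + (1 + e))) - (2 * c ^ 2 - 1) ^ 2 =
      (1 + 2 * e - 24 * e ^ 2) ^ 2 + (e + 41 * e ^ 3 + 304 * e ^ 4 + 3424 * e ^ 5 + 5696 * e ^ 6 +
        5304 * e ^ 7 + 2976 * e ^ 8 + 1008 * e ^ 9 + 192 * e ^ 10 + 16 * e ^ 11) := by
    rw [hc]
    ring
  rw [← sub_pos, sos]
  positivity

lemma sq_mul_cosh_lt_cosh_add_one_mul_sinh_sq {t : ℝ} (ht : 0 < t) :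
    (t * Real.cosh t) ^ 2 < (Real.cosh t + 1) * Real.sinh t ^ 2 := by
  set c := Real.cosh (t / 2)
  set d := Real.cosh (t / 4) with hd
  set k := Real.cosh (t / 8) with hk
  have cosh_t : Real.cosh t = 2 * c ^ 2 - 1 := cosh_eq_two_mul_cosh_half_sq_sub_one t
  have cosh_half : c = 2 * d ^ 2 - 1 := by
    rw [hd, show t / 4 = t / 2 / 2 by ring]
    exact cosh_eq_two_mul_cosh_half_sq_sub_one (t / 2)
  have cosh_quarter : d = 2 * k ^ 2 - 1 := by
    rw [hk, show t / 8 = t / 4 / 2 by ring]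
    exact cosh_eq_two_mul_cosh_half_sq_sub_one (t / 4)
  have one_lt_d : 1 < d := Real.one_lt_cosh.mpr (by positivity)
  have sinh_bound : t * (c * d * k) ≤ Real.sinh t := by
    convert mul_prod_cosh_le_sinh ht.le 3
    norm_num [Finset.prod_range_succ, c, d, k]
  calc (t * Real.cosh t) ^ 2 = t ^ 2 * (2 * c ^ 2 - 1) ^ 2 := by rw [cosh_t]; ring
    _ < t ^ 2 * (c ^ 4 * (d ^ 2 * (1 + d))) := by
      gcongr
      exact sq_two_mul_sq_sub_one_lt_pow_four_mul one_lt_d cosh_half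
    _ = (Real.cosh t + 1) * (t * (c * d * k)) ^ 2 := by
      rw [cosh_t, show 1 + d = 2 * k ^ 2 by rw [cosh_quarter]; ring]
      ring
    _ ≤ (Real.cosh t + 1) * Real.sinh t ^ 2 := by
      gcongr

theorem transcendental_inequality_general (u : ℝ) (hu0 : 0 < u) :
    (u + 1) * arcosh (u + 1) < (u + 2) * Real.sqrt u := by
  have one_lt : 1 < u + 1 := by linarith
  have cosh_arcosh : Real.cosh (arcosh (u + 1)) = u + 1 := Real.cosh_arcosh one_lt.le
  have arcosh_pos : 0 < arcosh (u + 1) := Real.arcosh_pos one_lt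
  refine lt_of_pow_lt_pow_left₀ 2 (by positivity) ?_
  calc ((u + 1) * arcosh (u + 1)) ^ 2
      = (arcosh (u + 1) * Real.cosh (arcosh (u + 1))) ^ 2 := by rw [cosh_arcosh, mul_comm]
    _ < (Real.cosh (arcosh (u + 1)) + 1) * Real.sinh (arcosh (u + 1)) ^ 2 :=
      sq_mul_cosh_lt_cosh_add_one_mul_sinh_sq arcosh_pos
    _ = (u + 2) ^ 2 * u := by rw [Real.sinh_sq, cosh_arcosh]; ring
    _ = ((u + 2) * Real.sqrt u) ^ 2 := by rw [mul_pow, Real.sq_sqrt hu0.le]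

/-- Transcendental inequality: for every real `u` with `0 < u ≤ 1`,
`(u + 2)·√u > (u + 1)·arcosh(u + 1)`. -/
theorem transcendental_inequality (u : ℝ) (hu0 : 0 < u) (hu1 : u ≤ 1) :
    (u + 1) * arcosh (u + 1) < (u + 2) * Real.sqrt u :=
  transcendental_inequality_general u hu0

end MoriCatenoid
end
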